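/- arXiv:2207.09826 — 7 statements merged into one kernel-verified Lean document; each statement's English description precedes it below -/
import Mathlib

section
/- Let m, n : ℕ and let G be a simple graph on the grid vertex set V = Fin m × Fin n, with signed Laplacian L(G) = D(G) − A(G). Then the partial transpose (L(G))^Γ is positive semidefinite if and only if D(G) = D(G^Γ). (Equivalently: the grid state obtained by trace-normalizing L(G) is positive under partial transpose if and only if the degree matrices of G and of its partial transpose graph coincide.) -/
open Matrix

-- Adjacency matrix of a simple graph, with real entries.
open scoped Classical in
noncomputable def adjM {V : Type*} [Fintype V] (G : SimpleGraph V) : Matrix V V ℝ :=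
  Matrix.of fun u v => if G.Adj u v then 1 else 0

-- Degree matrix of a simple graph: diagonal, with the vertex degrees on the diagonal.
open scoped Classical in
noncomputable def degM {V : Type*} [Fintype V] [DecidableEq V] (G : SimpleGraph V) :
    Matrix V V ℝ :=
  Matrix.diagonal fun v => ∑ u, if G.Adj v u then (1 : ℝ) else 0

/-- Signed Laplacian `L = D - A`. -/
noncomputable def lapL {V : Type*} [Fintype V] [DecidableEq V] (G : SimpleGraph V) :
    Matrix V V ℝ :=
  degM G - adjM G

/-- Partial transpose of a matrix indexed by the grid `Fin m × Fin n`. -/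
def pt {m n : ℕ} (M : Matrix (Fin m × Fin n) (Fin m × Fin n) ℝ) :
    Matrix (Fin m × Fin n) (Fin m × Fin n) ℝ :=
  Matrix.of fun p q => M (p.1, q.2) (q.1, p.2)

/-- Partial transpose graph: `(i,j) ~ (k,l)` iff `(i,l) ~ (k,j)` in `G`. -/
def ptGraph {m n : ℕ} (G : SimpleGraph (Fin m × Fin n)) : SimpleGraph (Fin m × Fin n) where
  Adj p q := G.Adj (p.1, q.2) (q.1, p.2)
  symm := ⟨fun _ _ h => G.symm.symm _ _ h⟩
  loopless := ⟨fun p h => G.loopless.irrefl _ h⟩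

/-!
The partial transpose fixes diagonal matrices and sends `A(G)` to `A(G^Γ)`, so
`L(G)^Γ = D(G) - A(G^Γ) = (D(G) - D(G^Γ)) + L(G^Γ)`. The Laplacian `L(G^Γ)` is positive
semidefinite and kills the all-ones vector `1`, while `tr D(G) = tr D(G^Γ)` because partial
transposition only permutes the entries of `A(G)`. Hence `1ᵀ L(G)^Γ 1 = 0`, and if `L(G)^Γ` is
positive semidefinite this forces `L(G)^Γ 1 = 0`, whose entries are the differences of degrees.
-/

section DiagonalPerturbation

open scoped ComplexOrder

variable {V 𝕜 : Type*} [Fintype V] [DecidableEq V] [RCLike 𝕜]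

lemma posSemidef_diagonal_add_iff {L : Matrix V V 𝕜} {e : V → 𝕜} (hL : L.PosSemidef)
    (hL_one : L *ᵥ 1 = 0) (he : ∑ v, e v ≤ 0) :
    (diagonal e + L).PosSemidef ↔ e = 0 := by
  have mulVec_one : (diagonal e + L) *ᵥ 1 = e := by
    ext v
    simp [add_mulVec, hL_one, mulVec_diagonal]
  have quadForm_one : star 1 ⬝ᵥ ((diagonal e + L) *ᵥ 1) = ∑ v, e v := by
    rw [mulVec_one, star_one, one_dotProduct]
  constructor
  · intro h
    have sum_eq_zero : ∑ v, e v = 0 :=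
      le_antisymm he (quadForm_one ▸ h.dotProduct_mulVec_nonneg 1)
    rw [← mulVec_one, ← h.dotProduct_mulVec_zero_iff, quadForm_one, sum_eq_zero]
  · rintro rfl
    simpa using hL

end DiagonalPerturbation

section Laplacian

variable {V : Type*} [Fintype V]

lemma adjM_eq_adjMatrix (H : SimpleGraph V) [DecidableRel H.Adj] : adjM H = H.adjMatrix ℝ := by
  ext u v
  simp [adjM]

variable [DecidableEq V]

lemma degM_eq_degMatrix (H : SimpleGraph V) [DecidableRel H.Adj] : degM H = H.degMatrix ℝ := by
  refine congrArg diagonal (funext fun v => ?_)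
  rw [H.degree_eq_sum_if_adj]
  congr!

lemma lapL_eq_lapMatrix (H : SimpleGraph V) [DecidableRel H.Adj] : lapL H = H.lapMatrix ℝ := by
  rw [lapL, degM_eq_degMatrix, adjM_eq_adjMatrix, SimpleGraph.lapMatrix]

lemma lapL_posSemidef (H : SimpleGraph V) : (lapL H).PosSemidef := by
  classical
  exact lapL_eq_lapMatrix H ▸ H.posSemidef_lapMatrix ℝ

lemma lapL_mulVec_one (H : SimpleGraph V) : lapL H *ᵥ 1 = 0 := by
  classical
  exact lapL_eq_lapMatrix H ▸ H.lapMatrix_mulVec_const_eq_zero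

lemma diagonal_diag_degM (H : SimpleGraph V) : diagonal (degM H).diag = degM H := by
  rw [degM, diag_diagonal]

lemma trace_degM (H : SimpleGraph V) : (degM H).trace = ∑ u, ∑ v, adjM H u v := by
  simp [degM, adjM]

theorem degree_criterion_L_general (H : SimpleGraph V) {d : V → ℝ}
    (hd : (diagonal d).trace ≤ (degM H).trace) :
    (diagonal d - adjM H).PosSemidef ↔ diagonal d = degM H := by
  have decomposition : diagonal d - adjM H = diagonal (d - (degM H).diag) + lapL H := by
    rw [Pi.sub_def, ← diagonal_sub, diagonal_diag_degM, lapL, sub_add_sub_cancel]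
  have sum_excess_nonpos : ∑ v, (d - (degM H).diag) v ≤ 0 := by
    simpa [trace] using hd
  rw [decomposition, posSemidef_diagonal_add_iff (lapL_posSemidef H) (lapL_mulVec_one H)
    sum_excess_nonpos, sub_eq_zero, ← diagonal_injective.eq_iff, diagonal_diag_degM]

end Laplacian

section PartialTranspose

variable {m n : ℕ}

lemma pt_sub (M N : Matrix (Fin m × Fin n) (Fin m × Fin n) ℝ) : pt (M - N) = pt M - pt N :=
  rfl

lemma pt_diagonal (d : Fin m × Fin n → ℝ) : pt (diagonal d) = diagonal d := by
  ext ⟨i, j⟩ ⟨k, l⟩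
  by_cases h : i = k ∧ j = l
  · obtain ⟨rfl, rfl⟩ := h
    simp [pt]
  · have h' : ¬(i = k ∧ l = j) := fun h' => h ⟨h'.1, h'.2.symm⟩
    simp [pt, diagonal_apply, h, h']

lemma pt_adjM (G : SimpleGraph (Fin m × Fin n)) : pt (adjM G) = adjM (ptGraph G) :=
  rfl

lemma pt_lapL (G : SimpleGraph (Fin m × Fin n)) :
    pt (lapL G) = degM G - adjM (ptGraph G) := by
  rw [lapL, pt_sub, pt_adjM, degM, pt_diagonal]

lemma sum_pt (M : Matrix (Fin m × Fin n) (Fin m × Fin n) ℝ) :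
    ∑ p, ∑ q, pt M p q = ∑ p, ∑ q, M p q := by
  simp only [Fintype.sum_prod_type, pt, of_apply]
  refine Finset.sum_congr rfl fun i _ => ?_
  calc ∑ j, ∑ k, ∑ l, M (i, l) (k, j)
      = ∑ k, ∑ j, ∑ l, M (i, l) (k, j) := Finset.sum_comm
    _ = ∑ k, ∑ l, ∑ j, M (i, l) (k, j) := Finset.sum_congr rfl fun _ _ => Finset.sum_comm
    _ = ∑ l, ∑ k, ∑ j, M (i, l) (k, j) := Finset.sum_comm

lemma trace_degM_ptGraph (G : SimpleGraph (Fin m × Fin n)) :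
    (degM (ptGraph G)).trace = (degM G).trace := by
  rw [trace_degM, ← pt_adjM, sum_pt, ← trace_degM]

end PartialTranspose

/-- Degree criterion for `L`-graphs: the partial transpose of the signed Laplacian of a
grid-labelled graph is positive semidefinite iff the degree matrices of the graph and of its
partial transpose graph coincide. -/
theorem degree_criterion_L (m n : ℕ) (G : SimpleGraph (Fin m × Fin n)) :
    (pt (lapL G)).PosSemidef ↔ degM G = degM (ptGraph G) := by
  rw [pt_lapL]
  exact degree_criterion_L_general (ptGraph G) (trace_degM_ptGraph G).ge
end

section
/- Let m, n : ℕ, V = Fin m × Fin n, and let ρ be a separable V×V complex matrix (in particular ρ is Hermitian and positive semidefinite). Then the range of ρ is spanned by product vectors lying in it: every vector in the range of ρ is a finite linear combination of vectors z in the range of ρ of product form z(i,j) = x(i)·y(j) for some x : Fin m → ℂ and y : Fin n → ℂ. In particular, if a Hermitian positive semidefinite V×V matrix of rank r has fewer than r linearly independent product vectors in its range, then it is not separable (it is entangled). -/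
open Matrix
open scoped ComplexOrder

/-- A `V × V` complex matrix (`V = Fin m × Fin n`) is separable if it is a finite sum of
(unnormalized) projectors onto product vectors. -/
def MatrixIsSeparable {m n : ℕ} (ρ : Matrix (Fin m × Fin n) (Fin m × Fin n) ℂ) : Prop :=
  ∃ (T : Finset ℕ) (x : ℕ → Fin m → ℂ) (y : ℕ → Fin n → ℂ),
    ∀ (i k : Fin m) (j l : Fin n),
      ρ (i, j) (k, l) = ∑ t ∈ T, x t i * star (x t k) * (y t j * star (y t l))

/-- A product vector on the grid: `z (i,j) = x i * y j`. -/
def IsProductVec {m n : ℕ} (z : Fin m × Fin n → ℂ) : Prop :=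
  ∃ (x : Fin m → ℂ) (y : Fin n → ℂ), ∀ (i : Fin m) (j : Fin n), z (i, j) = x i * y j

/-!
Collecting the product vectors `x_t ⊗ y_t` of a separable decomposition as the columns of a matrix
`A` gives `ρ = A * Aᴴ`. Since `A * Aᴴ` and `A` have the same rank, their ranges agree, so the range
of `ρ` is the column space of `A`. A basis of it chosen among the product vectors it contains then
has `ρ.rank` elements.
-/

section StarOrderedField

variable {ι κ R : Type*} [Fintype ι] [Fintype κ] [Field R] [PartialOrder R] [StarRing R]
  [StarOrderedRing R]

theorem range_mulVecLin_self_mul_conjTranspose (A : Matrix ι κ R) :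
    LinearMap.range (A * Aᴴ).mulVecLin = LinearMap.range A.mulVecLin := by
  have range_le : LinearMap.range (A * Aᴴ).mulVecLin ≤ LinearMap.range A.mulVecLin := by
    rw [mulVecLin_mul]
    exact LinearMap.range_comp_le_range _ _
  exact Submodule.eq_of_le_of_finrank_eq range_le (rank_self_mul_conjTranspose A)

theorem range_mulVecLin_self_mul_conjTranspose_eq_span_of_forall_col {A : Matrix ι κ R}
    {p : (ι → R) → Prop} (hA : ∀ k, p (A.col k)) :
    LinearMap.range (A * Aᴴ).mulVecLin =
      Submodule.span R {z | z ∈ LinearMap.range (A * Aᴴ).mulVecLin ∧ p z} := by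
  have range_eq : LinearMap.range (A * Aᴴ).mulVecLin = Submodule.span R (Set.range A.col) := by
    rw [range_mulVecLin_self_mul_conjTranspose, range_mulVecLin]
  have span_le : Submodule.span R {z | z ∈ LinearMap.range (A * Aᴴ).mulVecLin ∧ p z} ≤
      LinearMap.range (A * Aᴴ).mulVecLin :=
    Submodule.span_le.2 fun _ hz => hz.1
  refine le_antisymm (range_eq.trans_le (Submodule.span_mono ?_)) span_le
  rintro _ ⟨k, rfl⟩
  exact ⟨range_eq.ge (Submodule.subset_span ⟨k, rfl⟩), hA k⟩

end StarOrderedField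

namespace MatrixIsSeparable

variable {m n : ℕ} {ρ : Matrix (Fin m × Fin n) (Fin m × Fin n) ℂ}

theorem exists_eq_self_mul_conjTranspose (hρ : MatrixIsSeparable ρ) :
    ∃ (T : Finset ℕ) (A : Matrix (Fin m × Fin n) T ℂ),
      ρ = A * Aᴴ ∧ ∀ t, IsProductVec (A.col t) := by
  obtain ⟨T, x, y, hρ⟩ := hρ
  refine ⟨T, of fun v t => x t v.1 * y t v.2, ?_, fun t => ⟨x t, y t, fun _ _ => rfl⟩⟩
  ext ⟨i, j⟩ ⟨k, l⟩
  simp only [hρ, mul_apply, conjTranspose_apply, of_apply, star_mul, ← Finset.sum_coe_sort T]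
  exact Finset.sum_congr rfl fun t _ => by ring

theorem range_mulVecLin_eq_span_isProductVec (hρ : MatrixIsSeparable ρ) :
    LinearMap.range ρ.mulVecLin =
      Submodule.span ℂ {z | z ∈ LinearMap.range ρ.mulVecLin ∧ IsProductVec z} := by
  obtain ⟨T, A, rfl, hA⟩ := hρ.exists_eq_self_mul_conjTranspose
  exact range_mulVecLin_self_mul_conjTranspose_eq_span_of_forall_col hA

theorem exists_finset_isProductVec_card_eq_rank (hρ : MatrixIsSeparable ρ) :
    ∃ s : Finset (Fin m × Fin n → ℂ),
      (∀ z ∈ s, z ∈ LinearMap.range ρ.mulVecLin ∧ IsProductVec z) ∧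
        LinearIndepOn ℂ id (s : Set (Fin m × Fin n → ℂ)) ∧ s.card = ρ.rank := by
  obtain ⟨s, hs, card_eq, -, indep⟩ := Submodule.exists_finset_span_eq_linearIndepOn ℂ
    {z | z ∈ LinearMap.range ρ.mulVecLin ∧ IsProductVec z}
  rw [← hρ.range_mulVecLin_eq_span_isProductVec] at card_eq
  exact ⟨s, hs, indep, card_eq⟩

end MatrixIsSeparable

/-- The range of a separable matrix is spanned by the product vectors lying in it; in
particular, a Hermitian positive semidefinite matrix of rank `r` with fewer than `r`
linearly independent product vectors in its range is entangled (not separable). -/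
theorem range_spanned_by_product_vectors (m n : ℕ)
    (ρ : Matrix (Fin m × Fin n) (Fin m × Fin n) ℂ) :
    (MatrixIsSeparable ρ →
      ∀ z : Fin m × Fin n → ℂ, (∃ u, ρ.mulVec u = z) →
        z ∈ Submodule.span ℂ
          {w : Fin m × Fin n → ℂ | (∃ u, ρ.mulVec u = w) ∧ IsProductVec w}) ∧
    (ρ.IsHermitian → ρ.PosSemidef →
      (∀ s : Finset (Fin m × Fin n → ℂ),
          (∀ z ∈ s, (∃ u, ρ.mulVec u = z) ∧ IsProductVec z) →
          LinearIndependent ℂ (fun z : s => (z : Fin m × Fin n → ℂ)) →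
          s.card < ρ.rank) →
      ¬ MatrixIsSeparable ρ) := by
  refine ⟨fun hρ _ hz => hρ.range_mulVecLin_eq_span_isProductVec.le hz, fun _ _ card_lt hρ => ?_⟩
  obtain ⟨s, hs, indep, card_eq⟩ := hρ.exists_finset_isProductVec_card_eq_rank
  exact (card_lt s hs indep).ne card_eq
end

section
/- Let n : ℕ and let M and Δ be n×n real matrices such that: M is symmetric and positive semidefinite; Δ is diagonal, has trace zero, and is nonzero; and there exists a vector v : Fin n → ℝ with v(i) ∈ {−1, 1} for every i and M·v = 0. Then M + Δ is not positive semidefinite; that is, there exists w : Fin n → ℝ with wᵀ(M + Δ)w < 0. -/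
open Matrix

/-!
The vector `v` satisfies `vᴴ (M + Δ) v = vᴴ Δ v = tr Δ`, because `M v = 0` and the entries of `v`
are unimodular. A positive semidefinite matrix whose form is nonpositive at `v`
annihilates `v`, but `(M + Δ) v = Δ v` is nonzero, since `Δ ≠ 0` is diagonal and `v` has no zero
entry.
-/

section IsDiag

variable {ι R : Type*} [Fintype ι]

theorem mulVec_apply_of_isDiag [NonUnitalNonAssocSemiring R] {D : Matrix ι ι R} (hD : D.IsDiag)
    (v : ι → R) (i : ι) : (D *ᵥ v) i = D i i * v i := by
  classical
  rw [← hD.diagonal_diag, mulVec_diagonal, diagonal_apply_eq]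

theorem mulVec_eq_zero_iff_of_isDiag [NonUnitalNonAssocSemiring R] [NoZeroDivisors R]
    {D : Matrix ι ι R} (hD : D.IsDiag) {v : ι → R} (hv : ∀ i, v i ≠ 0) :
    D *ᵥ v = 0 ↔ D = 0 := by
  refine ⟨fun hDv => ?_, fun hD₀ => by rw [hD₀, zero_mulVec]⟩
  have diag_eq_zero (i : ι) : D i i = 0 := by
    have hi : D i i * v i = 0 := by rw [← mulVec_apply_of_isDiag hD, hDv, Pi.zero_apply]
    exact (mul_eq_zero.mp hi).resolve_right (hv i)
  ext i j
  obtain rfl | hij := eq_or_ne i j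
  · exact diag_eq_zero i
  · exact hD hij

theorem star_dotProduct_mulVec_eq_trace_of_isDiag [CommSemiring R] [StarRing R]
    {D : Matrix ι ι R} (hD : D.IsDiag) {v : ι → R} (hv : ∀ i, star (v i) * v i = 1) :
    star v ⬝ᵥ D *ᵥ v = D.trace := by
  refine Finset.sum_congr rfl fun i _ => ?_
  rw [mulVec_apply_of_isDiag hD, Pi.star_apply, mul_left_comm, hv, mul_one, diag_apply]

end IsDiag

section PosSemidef

open scoped ComplexOrder

variable {ι 𝕜 : Type*} [Fintype ι] [RCLike 𝕜]

theorem not_posSemidef_of_mulVec_ne_zero {A : Matrix ι ι 𝕜} {x : ι → 𝕜}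
    (hx : star x ⬝ᵥ A *ᵥ x ≤ 0) (hAx : A *ᵥ x ≠ 0) : ¬ A.PosSemidef := fun hA =>
  hAx <| (hA.dotProduct_mulVec_zero_iff x).mp <| hx.antisymm (hA.dotProduct_mulVec_nonneg x)

theorem exists_star_dotProduct_mulVec_neg_of_not_posSemidef {A : Matrix ι ι 𝕜}
    (hA : A.IsHermitian) (hA' : ¬ A.PosSemidef) : ∃ w : ι → 𝕜, star w ⬝ᵥ A *ᵥ w < 0 := by
  by_contra! h
  refine hA' (.of_dotProduct_mulVec_nonneg hA fun w => ?_)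
  have form_im : RCLike.im (star w ⬝ᵥ A *ᵥ w) = 0 := hA.im_star_dotProduct_mulVec_self w
  have form_re : 0 ≤ RCLike.re (star w ⬝ᵥ A *ᵥ w) :=
    not_lt.mp fun hneg => h w (RCLike.neg_iff.mpr ⟨hneg, form_im⟩)
  exact RCLike.nonneg_iff.mpr ⟨form_re, form_im⟩

theorem psd_plus_traceless_diagonal_not_psd_general {M Δ : Matrix ι ι 𝕜} (hM : M.IsHermitian)
    (hΔ : Δ.IsHermitian) (hΔdiag : Δ.IsDiag) (hΔtr : Δ.trace ≤ 0) (hΔne : Δ ≠ 0)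
    {v : ι → 𝕜} (hv : ∀ i, ‖v i‖ = 1) (hMv : M *ᵥ v = 0) :
    ¬ (M + Δ).PosSemidef ∧ ∃ w : ι → 𝕜, star w ⬝ᵥ (M + Δ) *ᵥ w < 0 := by
  have add_mulVec_v : (M + Δ) *ᵥ v = Δ *ᵥ v := by rw [add_mulVec, hMv, zero_add]
  have form_nonpos : star v ⬝ᵥ (M + Δ) *ᵥ v ≤ 0 := by
    have star_mul_v (i : ι) : star (v i) * v i = 1 := by simp [RCLike.conj_mul, hv i]
    rwa [add_mulVec_v, star_dotProduct_mulVec_eq_trace_of_isDiag hΔdiag star_mul_v]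
  have mulVec_v_ne_zero : (M + Δ) *ᵥ v ≠ 0 := by
    have v_ne_zero (i : ι) : v i ≠ 0 := norm_ne_zero_iff.mp (by simp [hv i])
    rwa [add_mulVec_v, ne_eq, mulVec_eq_zero_iff_of_isDiag hΔdiag v_ne_zero]
  have not_psd := not_posSemidef_of_mulVec_ne_zero form_nonpos mulVec_v_ne_zero
  exact ⟨not_psd, exists_star_dotProduct_mulVec_neg_of_not_posSemidef (hM.add hΔ) not_psd⟩

end PosSemidef

/-- If `M` is symmetric positive semidefinite with a `±1` vector in its kernel, and `Δ` is a
nonzero traceless diagonal matrix, then `M + Δ` is not positive semidefinite: some vector `w`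
satisfies `wᵀ (M + Δ) w < 0`. -/
theorem psd_plus_traceless_diagonal_not_psd (n : ℕ) (M Δ : Matrix (Fin n) (Fin n) ℝ)
    (hM : M.PosSemidef)
    (hΔdiag : ∀ i j, i ≠ j → Δ i j = 0)
    (hΔtr : Δ.trace = 0)
    (hΔne : Δ ≠ 0)
    (v : Fin n → ℝ) (hv : ∀ i, v i = 1 ∨ v i = -1)
    (hMv : M.mulVec v = 0) :
    ¬ (M + Δ).PosSemidef ∧ ∃ w : Fin n → ℝ, w ⬝ᵥ (M + Δ).mulVec w < 0 := by
  have isDiag_Δ : Δ.IsDiag := hΔdiag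
  simpa only [star_trivial] using psd_plus_traceless_diagonal_not_psd_general hM.isHermitian
    isDiag_Δ.isSymm isDiag_Δ hΔtr.le hΔne (fun i => (abs_eq zero_le_one).mpr (hv i)) hMv
end

section
/- Let G be a bipartite simple graph on a finite vertex type V, and let c : V → Bool be a 2-coloring of G (c(u) ≠ c(v) whenever u and v are adjacent). For each connected component C of G define v_C : V → ℝ by v_C(u) = 1 if u ∈ C and c(u) = true, v_C(u) = −1 if u ∈ C and c(u) = false, and v_C(u) = 0 if u ∉ C. Then the family (v_C), indexed by the connected components of G, is a basis of the kernel {x : V → ℝ | Q(G)·x = 0} of the signless Laplacian Q(G), regarded as an ℝ-subspace of V → ℝ. -/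
open Matrix

/-- Signless Laplacian `Q = D + A`. -/
noncomputable def lapQ {V : Type*} [Fintype V] [DecidableEq V] (G : SimpleGraph V) :
    Matrix V V ℝ :=
  degM G + adjM G

-- The vector associated to a connected component `C` of `G` and a 2-coloring `c`:
-- it is `1` on vertices of `C` colored `true`, `-1` on vertices of `C` colored `false`,
-- and `0` outside of `C`.
open scoped Classical in
noncomputable def compVec {V : Type*} (G : SimpleGraph V) (c : V → Bool)
    (C : G.ConnectedComponent) : V → ℝ :=
  fun u => if G.connectedComponentMk u = C then (if c u then 1 else -1) else 0

/-!
Let `S` be the diagonal matrix with entry `1` at the vertices colored `true` and `-1` at those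
colored `false`. Since the coloring changes along every edge, `S * (D - A) * S = D + A`, so the
involution `S` carries the kernel of the Laplacian `D - A` onto the kernel of the signless
Laplacian. The component indicators form a basis of the former, and `S` turns each of them into the
corresponding component vector.
-/

section Conjugation

variable {m n R : Type*} [Fintype m] [DecidableEq m] [Fintype n] [DecidableEq n] [CommSemiring R]

lemma map_ker_toLin'_eq_ker_toLin'_conj (A : Matrix n n R) {P : Matrix m n R} {Q : Matrix n m R}
    (hPQ : P * Q = 1) (hQP : Q * P = 1) :
    (LinearMap.ker A.toLin').map (toLin'OfInv hQP hPQ : (n → R) →ₗ[R] m → R) =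
      LinearMap.ker (P * A * Q).toLin' := by
  have ker_P : LinearMap.ker P.toLin' = ⊥ := (toLin'OfInv hQP hPQ).ker
  calc
    _ = (LinearMap.ker A.toLin').comap Q.toLin' :=
      Submodule.map_equiv_eq_comap_symm (toLin'OfInv hQP hPQ) _
    _ = LinearMap.ker (P.toLin' ∘ₗ A.toLin' ∘ₗ Q.toLin') := by
      rw [LinearMap.ker_comp_of_ker_eq_bot _ ker_P, LinearMap.ker_comp]
    _ = LinearMap.ker (P * A * Q).toLin' := by
      rw [toLin'_mul, toLin'_mul, LinearMap.comp_assoc]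

end Conjugation

section ColorSign

variable {V R : Type*} [Ring R]

variable (R) in
/-- The sign vector of a `2`-coloring: `1` at the vertices colored `true`, `-1` at the others. The
diagonal matrix with these entries conjugates the Laplacian of a bipartite graph into the signless
Laplacian. -/
def colorSign (c : V → Bool) : V → R :=
  fun v => if c v then 1 else -1

variable {c : V → Bool}

lemma colorSign_mul_self (v : V) : colorSign R c v * colorSign R c v = 1 := by
  cases hv : c v <;> simp [colorSign, hv]

lemma colorSign_mul_of_ne {u v : V} (h : c u ≠ c v) :
    colorSign R c u * colorSign R c v = -1 := by
  cases hu : c u <;> cases hv : c v <;> simp_all [colorSign]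

variable [Fintype V] [DecidableEq V]

lemma diagonal_colorSign_mul_self :
    diagonal (colorSign R c) * diagonal (colorSign R c) = 1 := by
  simp only [diagonal_mul_diagonal, colorSign_mul_self, diagonal_one]

variable {G : SimpleGraph V} [DecidableRel G.Adj]

lemma diagonal_colorSign_conj_degMatrix :
    diagonal (colorSign R c) * G.degMatrix R * diagonal (colorSign R c) = G.degMatrix R := by
  simp only [SimpleGraph.degMatrix, diagonal_mul_diagonal, mul_assoc, Nat.cast_comm,
    ← mul_assoc (colorSign R c _), colorSign_mul_self, one_mul]

lemma diagonal_colorSign_conj_adjMatrix (hc : ∀ u v, G.Adj u v → c u ≠ c v) :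
    diagonal (colorSign R c) * G.adjMatrix R * diagonal (colorSign R c) = -G.adjMatrix R := by
  ext u v
  by_cases h : G.Adj u v
  · simp [mul_diagonal, diagonal_mul, -SimpleGraph.mul_adjMatrix_apply, h,
      colorSign_mul_of_ne (hc u v h)]
  · simp [mul_diagonal, diagonal_mul, -SimpleGraph.mul_adjMatrix_apply, h]

lemma diagonal_colorSign_conj_lapMatrix (hc : ∀ u v, G.Adj u v → c u ≠ c v) :
    diagonal (colorSign R c) * G.lapMatrix R * diagonal (colorSign R c) =
      G.degMatrix R + G.adjMatrix R := by
  rw [SimpleGraph.lapMatrix, mul_sub, sub_mul, diagonal_colorSign_conj_degMatrix,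
    diagonal_colorSign_conj_adjMatrix hc, sub_neg_eq_add]

end ColorSign

section ColorSignEquiv

variable {V R : Type*} [Fintype V] [DecidableEq V] [CommRing R]

variable (R) in
/-- The involution of `V → R` flipping the sign of the coordinates colored `false`; it carries the
kernel of the Laplacian of a bipartite graph onto that of the signless Laplacian. -/
def colorSignEquiv (c : V → Bool) : (V → R) ≃ₗ[R] V → R :=
  toLin'OfInv (diagonal_colorSign_mul_self (c := c)) diagonal_colorSign_mul_self

lemma colorSignEquiv_apply (c : V → Bool) (x : V → R) (v : V) :
    colorSignEquiv R c x v = colorSign R c v * x v :=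
  mulVec_diagonal (colorSign R c) x v

end ColorSignEquiv

section SignlessLaplacian

variable {V : Type*} [Fintype V] [DecidableEq V] {G : SimpleGraph V} {c : V → Bool}

lemma lapQ_eq_degMatrix_add_adjMatrix [DecidableRel G.Adj] :
    lapQ G = G.degMatrix ℝ + G.adjMatrix ℝ := by
  have degM_eq : degM G = G.degMatrix ℝ := by
    simp only [degM, SimpleGraph.degMatrix, SimpleGraph.degree_eq_sum_if_adj]
    congr!
  have adjM_eq : adjM G = G.adjMatrix ℝ := by
    ext u v
    simp [adjM, SimpleGraph.adjMatrix_apply]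
  rw [lapQ, degM_eq, adjM_eq]

lemma map_ker_lapMatrix_eq_ker_lapQ [DecidableRel G.Adj]
    (hc : ∀ u v, G.Adj u v → c u ≠ c v) :
    (LinearMap.ker (G.lapMatrix ℝ).toLin').map (colorSignEquiv ℝ c : (V → ℝ) →ₗ[ℝ] V → ℝ) =
      LinearMap.ker (lapQ G).mulVecLin := by
  rw [colorSignEquiv, map_ker_toLin'_eq_ker_toLin'_conj, diagonal_colorSign_conj_lapMatrix hc,
    ← lapQ_eq_degMatrix_add_adjMatrix, toLin'_apply']

lemma coe_lapMatrix_ker_basis_apply [DecidableRel G.Adj] [DecidableEq G.ConnectedComponent]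
    (C : G.ConnectedComponent) :
    (G.lapMatrix_ker_basis C : V → ℝ) =
      fun v => if G.connectedComponentMk v = C then 1 else 0 := by
  rw [SimpleGraph.lapMatrix_ker_basis, Module.Basis.mk_apply, SimpleGraph.lapMatrix_ker_basis_aux]

lemma colorSignEquiv_indicator_eq_compVec [DecidableEq G.ConnectedComponent]
    (C : G.ConnectedComponent) :
    colorSignEquiv ℝ c (fun v => if G.connectedComponentMk v = C then 1 else 0) =
      compVec G c C := by
  ext v
  simp [colorSignEquiv_apply, compVec, colorSign]

open scoped Classical in
/-- The basis of the kernel of the signless Laplacian of a bipartite graph obtained by applying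
the sign matrix of a `2`-coloring to the component basis of the kernel of the Laplacian. -/
noncomputable def lapQKerBasis (hc : ∀ u v, G.Adj u v → c u ≠ c v) :
    Module.Basis G.ConnectedComponent ℝ (LinearMap.ker (lapQ G).mulVecLin) :=
  G.lapMatrix_ker_basis.map <|
    LinearEquiv.ofSubmodules (colorSignEquiv ℝ c) _ _ (map_ker_lapMatrix_eq_ker_lapQ hc)

lemma coe_lapQKerBasis_apply (hc : ∀ u v, G.Adj u v → c u ≠ c v) (C : G.ConnectedComponent) :
    (lapQKerBasis hc C : V → ℝ) = compVec G c C := by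
  classical
  rw [lapQKerBasis, Module.Basis.map_apply, LinearEquiv.ofSubmodules_apply,
    coe_lapMatrix_ker_basis_apply, colorSignEquiv_indicator_eq_compVec]

end SignlessLaplacian

/-- For a bipartite graph `G` with 2-coloring `c`, the family of component vectors `v_C`
indexed by the connected components of `G` is a basis of the kernel of the signless
Laplacian `Q(G)`. -/
theorem compVec_basis_of_kernel_lapQ {V : Type*} [Fintype V] [DecidableEq V]
    (G : SimpleGraph V) (c : V → Bool) (hc : ∀ u v, G.Adj u v → c u ≠ c v) :
    (∀ C : G.ConnectedComponent, compVec G c C ∈ LinearMap.ker (lapQ G).mulVecLin) ∧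
    ∃ b : Module.Basis G.ConnectedComponent ℝ (LinearMap.ker (lapQ G).mulVecLin),
      ∀ C : G.ConnectedComponent, (b C : V → ℝ) = compVec G c C := by
  have basis_apply := coe_lapQKerBasis_apply hc
  exact ⟨fun C => basis_apply C ▸ (lapQKerBasis hc C).2, lapQKerBasis hc, basis_apply⟩
end

section
/- Let G be a simple graph on a finite vertex type V that is not bipartite. Then the real matrices L(G) and Q(G) have different ranks, and consequently there is no unitary complex V×V matrix U with Q(G) = U · L(G) · U† (where L(G) and Q(G) are regarded as complex matrices); in particular the trace-normalized grid states ρ_L(G) = L(G)/tr L(G) and ρ_Q(G) = Q(G)/tr Q(G) are not unitarily equivalent. -/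
open Matrix

/-- A simple graph is bipartite if it admits a proper 2-coloring. -/
def IsBipartite {V : Type*} (G : SimpleGraph V) : Prop :=
  ∃ c : V → Bool, ∀ u v, G.Adj u v → c u ≠ c v

/-!
The kernel of `L` consists of the functions constant on connected components. Since `Q = N Nᵀ` for
the unoriented incidence matrix `N`, the kernel of `Q` consists of the functions that change sign
along every edge. Such a function is determined by one value on each component, so the nullity of
`Q` is at most the number of components, which is the nullity of `L`. In case of equality some such
function takes the value `1` at a chosen vertex of every component; it is then `±1` everywhere, and
its level sets are a bipartition.
-/

lemma rank_mul_mul_of_isUnit {n R : Type*} [Fintype n] [DecidableEq n] [CommRing R]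
    {P Q : Matrix n n R} (hP : IsUnit P) (hQ : IsUnit Q) (M : Matrix n n R) :
    (P * M * Q).rank = M.rank := by
  rw [rank_mul_eq_left_of_isUnit_det _ _ ((isUnit_iff_isUnit_det Q).mp hQ),
    rank_mul_eq_right_of_isUnit_det _ _ ((isUnit_iff_isUnit_det P).mp hP)]

section FieldExtension

variable {m n K L : Type*} [Field K] [Field L] [Algebra K L]

lemma rank_map_algebraMap [Finite m] [Fintype n] (M : Matrix m n K) :
    (M.map (algebraMap K L)).rank = M.rank := by
  obtain ⟨κ, r, r_injective, span_eq, linearIndependent⟩ := exists_linearIndependent' K M.row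
  have : Finite κ := .of_injective r r_injective
  have : Fintype κ := .ofFinite κ
  let φ : (n → K) →ₗ[K] (n → L) := (Algebra.linearMap K L).compLeft n
  have span_map_eq : Submodule.span L (Set.range (φ ∘ M.row ∘ r)) =
      Submodule.span L (Set.range (φ ∘ M.row)) := by
    rw [← Submodule.span_span_of_tower K L (Set.range (φ ∘ M.row ∘ r)),
      ← Submodule.span_span_of_tower K L (Set.range (φ ∘ M.row)), Set.range_comp φ,
      Set.range_comp φ, ← Submodule.map_span, ← Submodule.map_span, span_eq]
  have linearIndependent_map : LinearIndependent L (φ ∘ M.row ∘ r) :=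
    linearIndependent_algebraMap_comp_iff.mpr linearIndependent
  calc (M.map (algebraMap K L)).rank
      = Module.finrank L (Submodule.span L (Set.range (φ ∘ M.row))) := rank_eq_finrank_span_row _
    _ = Fintype.card κ := by rw [← span_map_eq, finrank_span_eq_card linearIndependent_map]
    _ = M.rank := by
      rw [rank_eq_finrank_span_row, ← span_eq, finrank_span_eq_card linearIndependent]

lemma rank_eq_of_smul_map_eq_mul_smul_map_mul [Fintype n] [DecidableEq n]
    {A B : Matrix n n K} {a b : L} (ha : a ≠ 0) (hb : b ≠ 0) {P R : Matrix n n L}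
    (hP : IsUnit P) (hR : IsUnit R)
    (h : b • B.map (algebraMap K L) = P * (a • A.map (algebraMap K L)) * R) :
    A.rank = B.rank := by
  have rank_smul {c : L} (hc : c ≠ 0) (M : Matrix n n K) :
      (c • M.map (algebraMap K L)).rank = M.rank := by
    rw [rank_smul_of_mem_nonZeroDivisors _ (mem_nonZeroDivisors_of_ne_zero hc),
      rank_map_algebraMap]
  rw [← rank_smul hb B, h, rank_mul_mul_of_isUnit hP hR, rank_smul ha]

lemma trace_map_algebraMap_ne_zero [Fintype n] {M : Matrix n n K}
    (hM : M.trace ≠ 0) : (M.map (algebraMap K L)).trace ≠ 0 := by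
  rwa [← AddMonoidHom.map_trace, map_ne_zero]

end FieldExtension

lemma isBipartite_bot {V : Type*} : IsBipartite (⊥ : SimpleGraph V) :=
  ⟨fun _ => true, fun _ _ h => h.elim⟩

lemma ncard_edgeSet_ne_zero_of_not_isBipartite {V : Type*} [Finite V] {G : SimpleGraph V}
    (hG : ¬ IsBipartite G) : G.edgeSet.ncard ≠ 0 := by
  rw [Ne, Set.ncard_eq_zero, SimpleGraph.edgeSet_eq_empty]
  rintro rfl
  exact hG isBipartite_bot

section EdgeAlternating

variable {R V : Type*} {G : SimpleGraph V}

section Semiring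

variable [Semiring R]

variable (R G) in
/-- The `R`-valued functions on the vertices of `G` that change sign along every edge; the condition
is written `x u + x v = 0` so as to make sense without negation. -/
def edgeAlternating : Submodule R (V → R) where
  carrier := {x | ∀ ⦃u v⦄, G.Adj u v → x u + x v = 0}
  zero_mem' _ _ _ := add_zero 0
  add_mem' {x y} hx hy u v huv := by
    rw [Pi.add_apply, Pi.add_apply, add_add_add_comm, hx huv, hy huv, add_zero]
  smul_mem' c x hx u v huv := by
    rw [Pi.smul_apply, Pi.smul_apply, ← smul_add, hx huv, smul_zero]

lemma mem_edgeAlternating {x : V → R} :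
    x ∈ edgeAlternating R G ↔ ∀ ⦃u v⦄, G.Adj u v → x u + x v = 0 :=
  Iff.rfl

variable (R G) in
/-- Evaluation of edge-alternating functions at one vertex of each connected component `c`, namely
the representative `Quot.out c`. -/
noncomputable def evalOut : edgeAlternating R G →ₗ[R] (G.ConnectedComponent → R) :=
  (LinearMap.funLeft R R Quot.out).domRestrict (edgeAlternating R G)

end Semiring

section Ring

variable [Ring R]

lemma sq_eq_sq_of_mem_edgeAlternating_of_reachable {x : V → R} (hx : x ∈ edgeAlternating R G)
    {u v : V} (huv : G.Reachable u v) : x u ^ 2 = x v ^ 2 := by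
  obtain ⟨p⟩ := huv
  induction p with
  | nil => rfl
  | cons hadj _ ih => rw [eq_neg_of_add_eq_zero_left (hx hadj), neg_sq, ih]

lemma sq_eq_evalOut_sq (x : edgeAlternating R G) (v : V) :
    x.1 v ^ 2 = evalOut R G x (G.connectedComponentMk v) ^ 2 :=
  sq_eq_sq_of_mem_edgeAlternating_of_reachable x.2
    (SimpleGraph.ConnectedComponent.exact (Quot.out_eq _).symm)

lemma evalOut_injective [IsReduced R] : Function.Injective (evalOut R G) := by
  rw [injective_iff_map_eq_zero]
  intro x hx
  ext v
  have sq_eq_zero : x.1 v ^ 2 = 0 := by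
    rw [sq_eq_evalOut_sq, hx, Pi.zero_apply, zero_pow two_ne_zero]
  exact eq_zero_of_pow_eq_zero sq_eq_zero

variable [NeZero (2 : R)]

lemma isBipartite_of_forall_eq_one_or_eq_neg_one {x : V → R} (hx : x ∈ edgeAlternating R G)
    (eq_one_or : ∀ v, x v = 1 ∨ x v = -1) : IsBipartite G := by
  classical
  have neg_one_ne_one : (-1 : R) ≠ 1 := by
    rw [Ne, neg_eq_iff_add_eq_zero, one_add_one_eq_two]
    exact two_ne_zero
  refine ⟨fun v => decide (x v = 1), fun u v huv => ?_⟩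
  have hxu : x u = -x v := eq_neg_of_add_eq_zero_left (hx huv)
  rcases eq_one_or v with hxv | hxv <;> simp [hxu, hxv, neg_one_ne_one]

lemma isBipartite_of_evalOut_surjective [NoZeroDivisors R]
    (h : Function.Surjective (evalOut R G)) : IsBipartite G := by
  obtain ⟨x, hx⟩ := h 1
  refine isBipartite_of_forall_eq_one_or_eq_neg_one x.2 fun v => sq_eq_one_iff.mp ?_
  rw [sq_eq_evalOut_sq, hx, Pi.one_apply, one_pow]

end Ring

lemma finrank_edgeAlternating_lt {K : Type*} [Field K] [NeZero (2 : K)]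
    [Finite G.ConnectedComponent] (hG : ¬ IsBipartite G) :
    Module.finrank K (edgeAlternating K G) < Nat.card G.ConnectedComponent := by
  have : Fintype G.ConnectedComponent := .ofFinite _
  have range_ne_top : LinearMap.range (evalOut K G) ≠ ⊤ := fun h =>
    hG (isBipartite_of_evalOut_surjective (LinearMap.range_eq_top.mp h))
  calc Module.finrank K (edgeAlternating K G)
      = Module.finrank K (LinearMap.range (evalOut K G)) :=
        (LinearMap.finrank_range_of_inj evalOut_injective).symm
    _ < Module.finrank K (G.ConnectedComponent → K) := Submodule.finrank_lt range_ne_top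
    _ = Nat.card G.ConnectedComponent := by
      rw [Module.finrank_fintype_fun_eq_card, Nat.card_eq_fintype_card]

end EdgeAlternating

section Incidence

variable {R V : Type*} [Fintype V] [DecidableEq V] (G : SimpleGraph V) [DecidableRel G.Adj]

lemma transpose_incMatrix_mulVec_apply_of_adj [NonAssocSemiring R] (x : V → R) {u v : V}
    (huv : G.Adj u v) :
    ((G.incMatrix R)ᵀ *ᵥ x) s(u, v) = x u + x v := by
  have incMatrix_mul (w : V) :
      G.incMatrix R w s(u, v) * x w = if w ∈ ({u, v} : Finset V) then x w else 0 := by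
    simp [SimpleGraph.incMatrix_apply', SimpleGraph.mk'_mem_incidenceSet_iff, huv]
  simp only [mulVec, dotProduct, transpose_apply, incMatrix_mul]
  rw [Finset.sum_ite_mem, Finset.univ_inter, Finset.sum_pair huv.ne]

lemma transpose_incMatrix_mulVec_apply_of_not_adj [NonAssocSemiring R] (x : V → R) {u v : V}
    (huv : ¬ G.Adj u v) :
    ((G.incMatrix R)ᵀ *ᵥ x) s(u, v) = 0 := by
  simp [mulVec, dotProduct, SimpleGraph.incMatrix_apply', SimpleGraph.mk'_mem_incidenceSet_iff, huv]

lemma ker_transpose_incMatrix [CommSemiring R] :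
    LinearMap.ker (G.incMatrix R)ᵀ.mulVecLin = edgeAlternating R G := by
  ext x
  rw [LinearMap.mem_ker, mulVecLin_apply, mem_edgeAlternating]
  refine ⟨fun h u v huv => ?_, fun h => funext (Sym2.ind fun u v => ?_)⟩
  · rw [← transpose_incMatrix_mulVec_apply_of_adj G x huv, h, Pi.zero_apply]
  · by_cases huv : G.Adj u v
    · rw [transpose_incMatrix_mulVec_apply_of_adj G x huv, h huv, Pi.zero_apply]
    · rw [transpose_incMatrix_mulVec_apply_of_not_adj G x huv, Pi.zero_apply]

end Incidence

section Laplacians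

variable {V : Type*} [Fintype V] (G : SimpleGraph V)

lemma adjM_eq_adjMatrix_s8 [DecidableRel G.Adj] : adjM G = G.adjMatrix ℝ := by
  ext u v
  simp [adjM, SimpleGraph.adjMatrix_apply]

variable [DecidableEq V]

lemma degM_eq_degMatrix_s8 [DecidableRel G.Adj] : degM G = G.degMatrix ℝ := by
  simp only [degM, SimpleGraph.degMatrix, SimpleGraph.degree_eq_sum_if_adj]
  congr!

lemma lapL_eq_lapMatrix_s8 [DecidableRel G.Adj] : lapL G = G.lapMatrix ℝ := by
  rw [lapL, degM_eq_degMatrix_s8, adjM_eq_adjMatrix_s8, SimpleGraph.lapMatrix]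

lemma lapQ_eq_incMatrix_mul_transpose [DecidableRel G.Adj] :
    lapQ G = G.incMatrix ℝ * (G.incMatrix ℝ)ᵀ := by
  rw [lapQ, degM_eq_degMatrix_s8, adjM_eq_adjMatrix_s8, SimpleGraph.incMatrix_mul_transpose]
  ext u v
  obtain rfl | huv := eq_or_ne u v <;> simp [SimpleGraph.degMatrix, *]

lemma finrank_ker_lapL :
    Module.finrank ℝ (LinearMap.ker (lapL G).mulVecLin) = Nat.card G.ConnectedComponent := by
  classical
  rw [lapL_eq_lapMatrix_s8, ← toLin'_apply',
    ← SimpleGraph.card_connectedComponent_eq_finrank_ker_toLin'_lapMatrix,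
    Nat.card_eq_fintype_card]

lemma ker_lapQ : LinearMap.ker (lapQ G).mulVecLin = edgeAlternating ℝ G := by
  classical
  have ker_mul_transpose := ker_mulVecLin_transpose_mul_self (G.incMatrix ℝ)ᵀ
  rw [transpose_transpose] at ker_mul_transpose
  rw [lapQ_eq_incMatrix_mul_transpose, ker_mul_transpose, ker_transpose_incMatrix]

variable {G}

lemma rank_lapL_lt_rank_lapQ (hG : ¬ IsBipartite G) : (lapL G).rank < (lapQ G).rank := by
  have nullity_lt := finrank_edgeAlternating_lt (K := ℝ) hG
  rw [← finrank_ker_lapL, ← ker_lapQ] at nullity_lt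
  have rank_nullity_L := (lapL G).mulVecLin.finrank_range_add_finrank_ker
  have rank_nullity_Q := (lapQ G).mulVecLin.finrank_range_add_finrank_ker
  unfold Matrix.rank
  lia

variable (G)

lemma trace_degM_s8 : (degM G).trace = 2 * G.edgeSet.ncard := by
  classical
  rw [degM_eq_degMatrix_s8, SimpleGraph.degMatrix, trace_diagonal, ← Nat.cast_sum,
    G.sum_degrees_eq_twice_card_edges, ← SimpleGraph.coe_edgeFinset, Set.ncard_coe_finset,
    Nat.cast_mul, Nat.cast_two]

lemma trace_lapL : (lapL G).trace = 2 * G.edgeSet.ncard := by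
  classical
  rw [lapL, trace_sub, trace_degM_s8, adjM_eq_adjMatrix_s8, SimpleGraph.trace_adjMatrix, sub_zero]

lemma trace_lapQ : (lapQ G).trace = 2 * G.edgeSet.ncard := by
  classical
  rw [lapQ, trace_add, trace_degM_s8, adjM_eq_adjMatrix_s8, SimpleGraph.trace_adjMatrix, add_zero]

variable {G}

lemma trace_lapL_ne_zero (hG : ¬ IsBipartite G) : (lapL G).trace ≠ 0 := by
  rw [trace_lapL]
  exact_mod_cast mul_ne_zero two_ne_zero (ncard_edgeSet_ne_zero_of_not_isBipartite hG)

lemma trace_lapQ_ne_zero (hG : ¬ IsBipartite G) : (lapQ G).trace ≠ 0 := by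
  rw [trace_lapQ]
  exact_mod_cast mul_ne_zero two_ne_zero (ncard_edgeSet_ne_zero_of_not_isBipartite hG)

end Laplacians

/-- For a non-bipartite graph `G`, `L(G)` and `Q(G)` have different ranks; hence no unitary
`U` conjugates (the complexification of) `L(G)` into `Q(G)`, and likewise the trace-normalized
states `L(G)/tr L(G)` and `Q(G)/tr Q(G)` are not unitarily equivalent. -/
theorem lapL_lapQ_not_unitarily_equivalent {V : Type*} [Fintype V] [DecidableEq V]
    (G : SimpleGraph V) (hG : ¬ IsBipartite G) :
    (lapL G).rank ≠ (lapQ G).rank ∧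
    (¬ ∃ U : Matrix V V ℂ, star U * U = 1 ∧ U * star U = 1 ∧
        (lapQ G).map (fun a => (a : ℂ)) =
          U * (lapL G).map (fun a => (a : ℂ)) * star U) ∧
    (¬ ∃ U : Matrix V V ℂ, star U * U = 1 ∧ U * star U = 1 ∧
        (((lapQ G).map fun a => (a : ℂ)).trace)⁻¹ • ((lapQ G).map fun a => (a : ℂ)) =
          U * ((((lapL G).map fun a => (a : ℂ)).trace)⁻¹ •
            ((lapL G).map fun a => (a : ℂ))) * star U) := by
  have rank_ne := (rank_lapL_lt_rank_lapQ hG).ne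
  have not_equivalent {a b : ℂ} (ha : a ≠ 0) (hb : b ≠ 0) :
      ¬ ∃ U : Matrix V V ℂ, star U * U = 1 ∧ U * star U = 1 ∧
        b • (lapQ G).map (fun a => (a : ℂ)) =
          U * (a • (lapL G).map (fun a => (a : ℂ))) * star U := by
    rintro ⟨U, star_mul_self, mul_star_self, h⟩
    exact rank_ne (rank_eq_of_smul_map_eq_mul_smul_map_mul ha hb
      (.of_mul_eq_one _ mul_star_self) (.of_mul_eq_one _ star_mul_self) h)
  refine ⟨rank_ne, ?_, ?_⟩
  · simpa only [one_smul] using not_equivalent one_ne_zero one_ne_zero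
  · exact not_equivalent
      (inv_ne_zero (trace_map_algebraMap_ne_zero (trace_lapL_ne_zero hG)))
      (inv_ne_zero (trace_map_algebraMap_ne_zero (trace_lapQ_ne_zero hG)))
end

section
/- Let V be a finite type and let w and w' be weight functions on V with equal supports, i.e., for all u, v ∈ V, w u v ≠ 0 ↔ w' u v ≠ 0. Then the weighted signed Laplacians have identical kernels and the weighted signless Laplacians have identical kernels: for every x : V → ℝ, L_w·x = 0 ↔ L_{w'}·x = 0, and Q_w·x = 0 ↔ Q_{w'}·x = 0. -/
open Matrix

/-- Adjacency matrix of a weight function. -/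
def adjW {V : Type*} (w : V → V → ℝ) : Matrix V V ℝ := Matrix.of w

/-- Degree matrix of a weight function. -/
noncomputable def degW {V : Type*} [Fintype V] [DecidableEq V] (w : V → V → ℝ) :
    Matrix V V ℝ :=
  Matrix.diagonal fun v => ∑ u, w v u

/-!
For `s = ±1`, symmetrizing the quadratic form of `D + s A` gives
`2 xᵀ (D + s A) x = ∑ v, ∑ u, A v u * (x v + s * x u) ^ 2`. All terms are nonnegative, so `x` lies
in the kernel exactly when `x v + s * x u = 0` for every pair in the support of `A`, a condition in
which the values of the weights no longer appear.
-/

section SignLaplacian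

variable {V R : Type*} [Fintype V] [DecidableEq V] [CommRing R]

/-- The Laplacian `D + s A` of a weighted adjacency matrix `A`, where `D` is the diagonal matrix of
row sums. It treats both Laplacians at once: `s = -1` gives `D - A` and `s = 1` gives the signless
`D + A`. -/
def signLaplacian (s : R) (A : Matrix V V R) : Matrix V V R :=
  diagonal (fun v => ∑ u, A v u) + s • A

theorem signLaplacian_mulVec_apply (s : R) (A : Matrix V V R) (x : V → R) (v : V) :
    (signLaplacian s A *ᵥ x) v = ∑ u, A v u * (x v + s * x u) := by
  rw [signLaplacian, add_mulVec, smul_mulVec, Pi.add_apply, mulVec_diagonal, Pi.smul_apply,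
    smul_eq_mul, mulVec, dotProduct, Finset.sum_mul, Finset.mul_sum, ← Finset.sum_add_distrib]
  exact Finset.sum_congr rfl fun u _ => by ring

theorem two_mul_dotProduct_signLaplacian_mulVec {s : R} (hs : s ^ 2 = 1)
    {A : Matrix V V R} (hA : A.IsSymm) (x : V → R) :
    2 * (x ⬝ᵥ signLaplacian s A *ᵥ x) = ∑ v, ∑ u, A v u * (x v + s * x u) ^ 2 := by
  have row_form : x ⬝ᵥ signLaplacian s A *ᵥ x = ∑ v, ∑ u, x v * (A v u * (x v + s * x u)) := by
    simp only [dotProduct, signLaplacian_mulVec_apply, Finset.mul_sum]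
  have column_form : x ⬝ᵥ signLaplacian s A *ᵥ x =
      ∑ v, ∑ u, x u * (A v u * (x u + s * x v)) := by
    rw [row_form, Finset.sum_comm]
    simp only [hA.apply]
  calc 2 * (x ⬝ᵥ signLaplacian s A *ᵥ x)
      = ∑ v, ∑ u, (x v * (A v u * (x v + s * x u)) + x u * (A v u * (x u + s * x v))) := by
        rw [two_mul]
        nth_rw 1 [row_form]
        rw [column_form]
        simp only [Finset.sum_add_distrib]
    _ = ∑ v, ∑ u, A v u * (x v + s * x u) ^ 2 :=
        Finset.sum_congr rfl fun v _ => Finset.sum_congr rfl fun u _ => by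
          linear_combination (-(A v u * x u ^ 2)) * hs

variable [LinearOrder R] [IsStrictOrderedRing R]

theorem signLaplacian_mulVec_eq_zero_iff {s : R} (hs : s ^ 2 = 1) {A : Matrix V V R}
    (hA : A.IsSymm) (hA_nonneg : ∀ v u, 0 ≤ A v u) {x : V → R} :
    signLaplacian s A *ᵥ x = 0 ↔ ∀ v u, A v u ≠ 0 → x v + s * x u = 0 := by
  constructor
  · intro hx v u hvu
    have energy_eq_zero : ∑ v, ∑ u, A v u * (x v + s * x u) ^ 2 = 0 := by
      rw [← two_mul_dotProduct_signLaplacian_mulVec hs hA, hx, dotProduct_zero, mul_zero]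
    have term_nonneg (v u : V) : 0 ≤ A v u * (x v + s * x u) ^ 2 :=
      mul_nonneg (hA_nonneg v u) (sq_nonneg _)
    have row_eq_zero : ∑ u, A v u * (x v + s * x u) ^ 2 = 0 :=
      (Finset.sum_eq_zero_iff_of_nonneg fun v _ => Finset.sum_nonneg fun u _ => term_nonneg v u).1
        energy_eq_zero v (Finset.mem_univ v)
    have term_eq_zero : A v u * (x v + s * x u) ^ 2 = 0 :=
      (Finset.sum_eq_zero_iff_of_nonneg fun u _ => term_nonneg v u).1
        row_eq_zero u (Finset.mem_univ u)
    exact sq_eq_zero_iff.1 ((mul_eq_zero.1 term_eq_zero).resolve_left hvu)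
  · intro hx
    ext v
    rw [signLaplacian_mulVec_apply]
    exact Finset.sum_eq_zero fun u _ => mul_eq_zero.2 (or_iff_not_imp_left.2 (hx v u))

theorem weighted_laplacian_kernels_eq_general {s : R} (hs : s ^ 2 = 1) {A A' : Matrix V V R}
    (hA : A.IsSymm) (hA_nonneg : ∀ v u, 0 ≤ A v u)
    (hA' : A'.IsSymm) (hA'_nonneg : ∀ v u, 0 ≤ A' v u)
    (hsupp : ∀ v u, A v u ≠ 0 ↔ A' v u ≠ 0) (x : V → R) :
    signLaplacian s A *ᵥ x = 0 ↔ signLaplacian s A' *ᵥ x = 0 := by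
  simp only [signLaplacian_mulVec_eq_zero_iff hs hA hA_nonneg,
    signLaplacian_mulVec_eq_zero_iff hs hA' hA'_nonneg, hsupp]

end SignLaplacian

theorem degW_sub_adjW_eq_signLaplacian {V : Type*} [Fintype V] [DecidableEq V] (w : V → V → ℝ) :
    degW w - adjW w = signLaplacian (-1) (adjW w) := by
  rw [signLaplacian, neg_one_smul, ← sub_eq_add_neg]
  rfl

theorem degW_add_adjW_eq_signLaplacian {V : Type*} [Fintype V] [DecidableEq V] (w : V → V → ℝ) :
    degW w + adjW w = signLaplacian 1 (adjW w) := by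
  rw [signLaplacian, one_smul]
  rfl

/-- If two weight functions have equal supports, their weighted signed Laplacians have
identical kernels, and likewise for the weighted signless Laplacians. -/
theorem weighted_laplacian_kernels_eq {V : Type*} [Fintype V] [DecidableEq V]
    (w w' : V → V → ℝ)
    (hw_symm : ∀ u v, w u v = w v u) (hw_nonneg : ∀ u v, 0 ≤ w u v)
    (hw_diag : ∀ v, w v v = 0)
    (hw'_symm : ∀ u v, w' u v = w' v u) (hw'_nonneg : ∀ u v, 0 ≤ w' u v)
    (hw'_diag : ∀ v, w' v v = 0)
    (hsupp : ∀ u v, w u v ≠ 0 ↔ w' u v ≠ 0) :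
    ∀ x : V → ℝ,
      ((degW w - adjW w).mulVec x = 0 ↔ (degW w' - adjW w').mulVec x = 0) ∧
      ((degW w + adjW w).mulVec x = 0 ↔ (degW w' + adjW w').mulVec x = 0) := by
  intro x
  have kernels_eq {s : ℝ} (hs : s ^ 2 = 1) :=
    weighted_laplacian_kernels_eq_general hs (A := adjW w) (A' := adjW w')
      (IsSymm.ext fun u v => hw_symm v u) hw_nonneg
      (IsSymm.ext fun u v => hw'_symm v u) hw'_nonneg hsupp x
  simpa only [degW_sub_adjW_eq_signLaplacian, degW_add_adjW_eq_signLaplacian] using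
    And.intro (kernels_eq neg_one_sq) (kernels_eq (one_pow 2))
end

section
/- Let V be a finite type and let w_l, w_q, w_l', w_q' be weight functions on V such that the supports of w_l and w_q are disjoint, the supports of w_l' and w_q' are disjoint, the support of w_l' equals the support of w_l, and the support of w_q' equals the support of w_q. Define the weighted hybrid Laplacian 𝓛(w_l, w_q) = (D_{w_l} − A_{w_l}) + (D_{w_q} + A_{w_q}). Then the kernels coincide: for every x : V → ℝ, 𝓛(w_l, w_q)·x = 0 ↔ 𝓛(w_l', w_q')·x = 0. -/
open Matrix

/-- Weighted hybrid Laplacian `𝓛(w_l, w_q) = (D_{w_l} − A_{w_l}) + (D_{w_q} + A_{w_q})`. -/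
noncomputable def hybridLap {V : Type*} [Fintype V] [DecidableEq V] (wl wq : V → V → ℝ) :
    Matrix V V ℝ :=
  (degW wl - adjW wl) + (degW wq + adjW wq)

/-!
Pairing the hybrid Laplacian with `x` and symmetrizing gives
`2 xᵀ𝓛x = ∑ v, ∑ u, (w_l v u (x v - x u)² + w_q v u (x v + x u)²)`, a sum of nonnegative terms.
So `𝓛 x = 0` exactly when `x` agrees across every `L`-edge and changes sign across every `Q`-edge,
a condition that sees only the supports of the weights.
-/

section

variable {V : Type*} [Fintype V] [DecidableEq V]

theorem hybridLap_mulVec_apply (wl wq : V → V → ℝ) (x : V → ℝ) (v : V) :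
    (hybridLap wl wq *ᵥ x) v = ∑ u, (wl v u * (x v - x u) + wq v u * (x v + x u)) := by
  calc (hybridLap wl wq *ᵥ x) v
      = ((∑ u, wl v u) * x v - ∑ u, wl v u * x u) +
          ((∑ u, wq v u) * x v + ∑ u, wq v u * x u) := by
        simp only [hybridLap, degW, adjW, add_mulVec, sub_mulVec, Pi.add_apply, Pi.sub_apply,
          mulVec_diagonal]
        simp only [mulVec, dotProduct, of_apply]
    _ = ∑ u, (wl v u * (x v - x u) + wq v u * (x v + x u)) := by
        simp only [mul_sub, mul_add, Finset.sum_add_distrib, Finset.sum_sub_distrib,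
          Finset.sum_mul]

variable {wl wq : V → V → ℝ}

theorem two_mul_dotProduct_hybridLap_mulVec (hwl_symm : ∀ u v, wl u v = wl v u)
    (hwq_symm : ∀ u v, wq u v = wq v u) (x : V → ℝ) :
    2 * (x ⬝ᵥ hybridLap wl wq *ᵥ x) =
      ∑ v, ∑ u, (wl v u * (x v - x u) ^ 2 + wq v u * (x v + x u) ^ 2) := by
  have expand : x ⬝ᵥ hybridLap wl wq *ᵥ x =
      ∑ v, ∑ u, x v * (wl v u * (x v - x u) + wq v u * (x v + x u)) := by
    simp only [dotProduct, hybridLap_mulVec_apply, Finset.mul_sum]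
  have expand_swap : x ⬝ᵥ hybridLap wl wq *ᵥ x =
      ∑ v, ∑ u, x u * (wl v u * (x u - x v) + wq v u * (x u + x v)) := by
    rw [expand, Finset.sum_comm]
    exact Fintype.sum_congr _ _ fun v => Fintype.sum_congr _ _ fun u => by
      rw [hwl_symm u v, hwq_symm u v]
  calc 2 * (x ⬝ᵥ hybridLap wl wq *ᵥ x)
      = ∑ v, ∑ u, x v * (wl v u * (x v - x u) + wq v u * (x v + x u)) +
          ∑ v, ∑ u, x u * (wl v u * (x u - x v) + wq v u * (x u + x v)) := by
        rw [← expand, ← expand_swap, two_mul]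
    _ = ∑ v, ∑ u, (wl v u * (x v - x u) ^ 2 + wq v u * (x v + x u) ^ 2) := by
        simp only [← Finset.sum_add_distrib]
        exact Fintype.sum_congr _ _ fun v => Fintype.sum_congr _ _ fun u => by ring

theorem dotProduct_hybridLap_mulVec_eq_zero_iff
    (hwl_symm : ∀ u v, wl u v = wl v u) (hwl_nonneg : ∀ u v, 0 ≤ wl u v)
    (hwq_symm : ∀ u v, wq u v = wq v u) (hwq_nonneg : ∀ u v, 0 ≤ wq u v) {x : V → ℝ} :
    x ⬝ᵥ hybridLap wl wq *ᵥ x = 0 ↔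
      ∀ v u, (wl v u ≠ 0 → x v = x u) ∧ (wq v u ≠ 0 → x v = -x u) := by
  have hl_nonneg (v u : V) : 0 ≤ wl v u * (x v - x u) ^ 2 :=
    mul_nonneg (hwl_nonneg v u) (sq_nonneg _)
  have hq_nonneg (v u : V) : 0 ≤ wq v u * (x v + x u) ^ 2 :=
    mul_nonneg (hwq_nonneg v u) (sq_nonneg _)
  have hterm_nonneg (v u : V) :
      0 ≤ wl v u * (x v - x u) ^ 2 + wq v u * (x v + x u) ^ 2 :=
    add_nonneg (hl_nonneg v u) (hq_nonneg v u)
  calc x ⬝ᵥ hybridLap wl wq *ᵥ x = 0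
      ↔ ∑ v, ∑ u, (wl v u * (x v - x u) ^ 2 + wq v u * (x v + x u) ^ 2) = 0 := by
        rw [← two_mul_dotProduct_hybridLap_mulVec hwl_symm hwq_symm,
          mul_eq_zero_iff_left two_ne_zero]
    _ ↔ ∀ v u, wl v u * (x v - x u) ^ 2 + wq v u * (x v + x u) ^ 2 = 0 := by
        rw [Fintype.sum_eq_zero_iff_of_nonneg
          fun v => Fintype.sum_nonneg (hterm_nonneg v), funext_iff]
        exact forall_congr' fun v =>
          (Fintype.sum_eq_zero_iff_of_nonneg (hterm_nonneg v)).trans funext_iff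
    _ ↔ ∀ v u, (wl v u ≠ 0 → x v = x u) ∧ (wq v u ≠ 0 → x v = -x u) := by
        refine forall₂_congr fun v u => ?_
        rw [add_eq_zero_iff_of_nonneg (hl_nonneg v u) (hq_nonneg v u)]
        simp only [mul_eq_zero, sq_eq_zero_iff, sub_eq_zero, ← eq_neg_iff_add_eq_zero,
          or_iff_not_imp_left]

theorem hybridLap_mulVec_eq_zero_iff
    (hwl_symm : ∀ u v, wl u v = wl v u) (hwl_nonneg : ∀ u v, 0 ≤ wl u v)
    (hwq_symm : ∀ u v, wq u v = wq v u) (hwq_nonneg : ∀ u v, 0 ≤ wq u v) {x : V → ℝ} :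
    hybridLap wl wq *ᵥ x = 0 ↔
      ∀ v u, (wl v u ≠ 0 → x v = x u) ∧ (wq v u ≠ 0 → x v = -x u) := by
  constructor
  · intro hx
    rw [← dotProduct_hybridLap_mulVec_eq_zero_iff hwl_symm hwl_nonneg hwq_symm hwq_nonneg, hx,
      dotProduct_zero]
  · intro hx
    funext v
    rw [hybridLap_mulVec_apply]
    refine Finset.sum_eq_zero fun u _ => ?_
    have hl : wl v u * (x v - x u) = 0 :=
      mul_eq_zero.2 (or_iff_not_imp_left.2 fun hne => sub_eq_zero.2 ((hx v u).1 hne))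
    have hq : wq v u * (x v + x u) = 0 :=
      mul_eq_zero.2 (or_iff_not_imp_left.2 fun hne => eq_neg_iff_add_eq_zero.1 ((hx v u).2 hne))
    rw [hl, hq, add_zero]

theorem weighted_hybrid_laplacian_kernels_eq_general {wl' wq' : V → V → ℝ}
    (hwl_symm : ∀ u v, wl u v = wl v u) (hwl_nonneg : ∀ u v, 0 ≤ wl u v)
    (hwq_symm : ∀ u v, wq u v = wq v u) (hwq_nonneg : ∀ u v, 0 ≤ wq u v)
    (hwl'_symm : ∀ u v, wl' u v = wl' v u) (hwl'_nonneg : ∀ u v, 0 ≤ wl' u v)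
    (hwq'_symm : ∀ u v, wq' u v = wq' v u) (hwq'_nonneg : ∀ u v, 0 ≤ wq' u v)
    (hsuppl : ∀ u v, wl' u v ≠ 0 ↔ wl u v ≠ 0)
    (hsuppq : ∀ u v, wq' u v ≠ 0 ↔ wq u v ≠ 0) (x : V → ℝ) :
    hybridLap wl wq *ᵥ x = 0 ↔ hybridLap wl' wq' *ᵥ x = 0 := by
  rw [hybridLap_mulVec_eq_zero_iff hwl_symm hwl_nonneg hwq_symm hwq_nonneg,
    hybridLap_mulVec_eq_zero_iff hwl'_symm hwl'_nonneg hwq'_symm hwq'_nonneg]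
  simp only [hsuppl, hsuppq]

end

/-- Kernels of weighted hybrid Laplacians only depend on the supports of the weight
functions. -/
theorem weighted_hybrid_laplacian_kernels_eq {V : Type*} [Fintype V] [DecidableEq V]
    (wl wq wl' wq' : V → V → ℝ)
    (hwl_symm : ∀ u v, wl u v = wl v u) (hwl_nonneg : ∀ u v, 0 ≤ wl u v)
    (hwl_diag : ∀ v, wl v v = 0)
    (hwq_symm : ∀ u v, wq u v = wq v u) (hwq_nonneg : ∀ u v, 0 ≤ wq u v)
    (hwq_diag : ∀ v, wq v v = 0)
    (hwl'_symm : ∀ u v, wl' u v = wl' v u) (hwl'_nonneg : ∀ u v, 0 ≤ wl' u v)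
    (hwl'_diag : ∀ v, wl' v v = 0)
    (hwq'_symm : ∀ u v, wq' u v = wq' v u) (hwq'_nonneg : ∀ u v, 0 ≤ wq' u v)
    (hwq'_diag : ∀ v, wq' v v = 0)
    (hdisj : ∀ u v, ¬ (wl u v ≠ 0 ∧ wq u v ≠ 0))
    (hdisj' : ∀ u v, ¬ (wl' u v ≠ 0 ∧ wq' u v ≠ 0))
    (hsuppl : ∀ u v, wl' u v ≠ 0 ↔ wl u v ≠ 0)
    (hsuppq : ∀ u v, wq' u v ≠ 0 ↔ wq u v ≠ 0) :
    ∀ x : V → ℝ, (hybridLap wl wq).mulVec x = 0 ↔ (hybridLap wl' wq').mulVec x = 0 := by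
  exact weighted_hybrid_laplacian_kernels_eq_general hwl_symm hwl_nonneg hwq_symm hwq_nonneg
    hwl'_symm hwl'_nonneg hwq'_symm hwq'_nonneg hsuppl hsuppq
end
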